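/- Let D ⊆ F × E be a Dirac structure which is the graph of a linear map J : E → F, i.e. D = {(Je, e) : e ∈ E} (such J is necessarily skew-symmetric). Then D is cyclically monotone if and only if J = 0. The same conclusion holds if D is the graph of a linear map J : F → E. -/

import Mathlib

/-- The duality pairing (standard inner product) on `ℝ^n`. -/
noncomputable def dot {n : ℕ} (e f : Fin n → ℝ) : ℝ := ∑ i, e i * f i

/-- The indefinite bilinear form `⟪(f₁,e₁),(f₂,e₂)⟫ = ⟨e₁,f₂⟩ + ⟨e₂,f₁⟩`. -/
noncomputable def bform {n : ℕ} (p q : (Fin n → ℝ) × (Fin n → ℝ)) : ℝ :=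
  dot p.2 q.1 + dot q.2 p.1

/-- A (constant) Dirac structure: a subspace `D ⊆ F × E` equal to its
orthogonal companion w.r.t. the indefinite bilinear form. -/
def IsDirac {n : ℕ} (D : Set ((Fin n → ℝ) × (Fin n → ℝ))) : Prop :=
  (∃ W : Submodule ℝ ((Fin n → ℝ) × (Fin n → ℝ)), D = ↑W) ∧
  D = {p | ∀ q ∈ D, bform p q = 0}

/-- Cyclically monotone relation `M ⊆ F × E` (elements `(f, e)`). -/
def CycMono2 {n : ℕ} (M : Set ((Fin n → ℝ) × (Fin n → ℝ))) : Prop :=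
  ∀ m : ℕ, 1 ≤ m → ∀ (f e : ℕ → Fin n → ℝ),
    (∀ i ≤ m, (f i, e i) ∈ M) → f (m + 1) = f 0 →
    0 ≤ ∑ i ∈ Finset.range (m + 1), dot (e i) (f i - f (i + 1))

/-!
On a self-orthogonal relation `M` the diagonal pairings `⟨e, f⟩` vanish, so the cyclic inequality
along `(0, 0), (f₁, e₁), (f₂, e₂)` collapses to `⟨e₁, f₂⟩ ≤ 0`. When `M = -M`, the sign of
`(f₁, e₁)` can be flipped and `⟨e₁, f₂⟩ = 0` for all pairs; conversely this makes every cyclic sum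
vanish. On the graph of `J` it says that the range of `J` pairs to zero with the whole dual space.
-/

section CyclicMonotonicity

variable {R E F : Type*} [CommRing R] [PartialOrder R] [AddCommGroup E] [Module R E]
  [AddCommGroup F] [Module R F]

/-- Cyclic monotonicity of a relation `M ⊆ F × E` with respect to an arbitrary pairing `B` of
efforts and flows. A cycle of length `m + 1` is encoded by sequences on `ℕ` with
`f (m + 1) = f 0`, so that `CycMono2` is definitionally the case where `B` is the dot product. -/
def IsCyclicallyMonotone (B : E →ₗ[R] F →ₗ[R] R) (M : Set (F × E)) : Prop :=
  ∀ m : ℕ, 1 ≤ m → ∀ (f : ℕ → F) (e : ℕ → E),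
    (∀ i ≤ m, (f i, e i) ∈ M) → f (m + 1) = f 0 →
    0 ≤ ∑ i ∈ Finset.range (m + 1), B (e i) (f i - f (i + 1))

variable {B : E →ₗ[R] F →ₗ[R] R} {M : Set (F × E)}

namespace IsCyclicallyMonotone

theorem three_cycle_nonneg (hM : IsCyclicallyMonotone B M) {p q r : F × E}
    (hp : p ∈ M) (hq : q ∈ M) (hr : r ∈ M) :
    0 ≤ B p.2 (p.1 - q.1) + B q.2 (q.1 - r.1) + B r.2 (r.1 - p.1) := by
  let cycle : ℕ → F × E
    | 1 => q
    | 2 => r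
    | _ => p
  have cycle_mem : ∀ i, cycle i ∈ M
    | 0 => hp
    | 1 => hq
    | 2 => hr
    | _ + 3 => hp
  have cycle_nonneg :=
    hM 2 one_le_two (fun i => (cycle i).1) (fun i => (cycle i).2) (fun i _ => cycle_mem i) rfl
  simp only [Finset.sum_range_succ, Finset.sum_range_zero, zero_add] at cycle_nonneg
  exact cycle_nonneg

variable [IsOrderedAddMonoid R]

theorem pairing_nonpos (hM : IsCyclicallyMonotone B M) (zero_mem : 0 ∈ M)
    (self_orth : ∀ p ∈ M, B p.2 p.1 = 0) {p q : F × E} (hp : p ∈ M) (hq : q ∈ M) :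
    B p.2 q.1 ≤ 0 := by
  have h := hM.three_cycle_nonneg zero_mem hp hq
  simpa [self_orth p hp, self_orth q hq] using h

theorem pairing_eq_zero (hM : IsCyclicallyMonotone B M) (zero_mem : 0 ∈ M)
    (neg_mem : ∀ p ∈ M, -p ∈ M) (self_orth : ∀ p ∈ M, B p.2 p.1 = 0) {p q : F × E}
    (hp : p ∈ M) (hq : q ∈ M) : B p.2 q.1 = 0 := by
  have h_neg : B (-p).2 q.1 ≤ 0 := hM.pairing_nonpos zero_mem self_orth (neg_mem p hp) hq
  refine le_antisymm (hM.pairing_nonpos zero_mem self_orth hp hq) ?_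
  simpa using h_neg

end IsCyclicallyMonotone

theorem isCyclicallyMonotone_of_pairing_eq_zero (hM : ∀ p ∈ M, ∀ q ∈ M, B p.2 q.1 = 0) :
    IsCyclicallyMonotone B M := by
  intro m _ f e mem closed
  refine (Finset.sum_eq_zero fun i hi => ?_).ge
  have hi : i ≤ m := Finset.mem_range_succ_iff.mp hi
  have pairing_succ : B (e i) (f (i + 1)) = 0 := by
    rcases hi.lt_or_eq with hlt | rfl
    · exact hM _ (mem i hi) _ (mem (i + 1) hlt)
    · rw [closed]
      exact hM _ (mem i hi) _ (mem 0 i.zero_le)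
  rw [map_sub, hM _ (mem i hi) _ (mem i hi), pairing_succ, sub_zero]

variable [IsOrderedAddMonoid R]

theorem isCyclicallyMonotone_iff_pairing_eq_zero (zero_mem : 0 ∈ M)
    (neg_mem : ∀ p ∈ M, -p ∈ M) (self_orth : ∀ p ∈ M, B p.2 p.1 = 0) :
    IsCyclicallyMonotone B M ↔ ∀ p ∈ M, ∀ q ∈ M, B p.2 q.1 = 0 :=
  ⟨fun hM _ hp _ hq => hM.pairing_eq_zero zero_mem neg_mem self_orth hp hq,
    isCyclicallyMonotone_of_pairing_eq_zero⟩

theorem isCyclicallyMonotone_effort_graph_iff (hB : B.SeparatingRight) {J : E →ₗ[R] F}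
    (hJ : ∀ e, B e (J e) = 0) :
    IsCyclicallyMonotone B {p | ∃ e, p = (J e, e)} ↔ J = 0 := by
  refine (isCyclicallyMonotone_iff_pairing_eq_zero ?zero_mem ?neg_mem ?self_orth).trans
    ⟨fun pairing_eq_zero => ?eq_zero, ?pairing_eq_zero⟩
  case zero_mem => exact ⟨0, by simp [Prod.zero_eq_mk]⟩
  case neg_mem =>
    rintro _ ⟨e, rfl⟩
    exact ⟨-e, by simp⟩
  case self_orth =>
    rintro _ ⟨e, rfl⟩
    exact hJ e
  case eq_zero =>
    ext e
    exact hB (J e) fun e' => pairing_eq_zero (J e', e') ⟨e', rfl⟩ (J e, e) ⟨e, rfl⟩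
  case pairing_eq_zero =>
    rintro rfl _ _ _ ⟨e, rfl⟩
    exact map_zero _

theorem isCyclicallyMonotone_flow_graph_iff (hB : B.SeparatingLeft) {J : F →ₗ[R] E}
    (hJ : ∀ f, B (J f) f = 0) :
    IsCyclicallyMonotone B {p | ∃ f, p = (f, J f)} ↔ J = 0 := by
  refine (isCyclicallyMonotone_iff_pairing_eq_zero ?zero_mem ?neg_mem ?self_orth).trans
    ⟨fun pairing_eq_zero => ?eq_zero, ?pairing_eq_zero⟩
  case zero_mem => exact ⟨0, by simp [Prod.zero_eq_mk]⟩
  case neg_mem =>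
    rintro _ ⟨f, rfl⟩
    exact ⟨-f, by simp⟩
  case self_orth =>
    rintro _ ⟨f, rfl⟩
    exact hJ f
  case eq_zero =>
    ext f
    exact hB (J f) fun f' => pairing_eq_zero (f, J f) ⟨f, rfl⟩ (f', J f') ⟨f', rfl⟩
  case pairing_eq_zero =>
    rintro rfl _ ⟨f, rfl⟩ q _
    exact B.map_zero₂ q.1

theorem dirac_graph_cycMonotone_iff_zero_general (hB : B.Nondegenerate) :
    (∀ J : E →ₗ[R] F, (∀ e, B e (J e) = 0) →
      (IsCyclicallyMonotone B {p | ∃ e, p = (J e, e)} ↔ J = 0)) ∧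
    (∀ J : F →ₗ[R] E, (∀ f, B (J f) f = 0) →
      (IsCyclicallyMonotone B {p | ∃ f, p = (f, J f)} ↔ J = 0)) :=
  ⟨fun _ => isCyclicallyMonotone_effort_graph_iff hB.2,
    fun _ => isCyclicallyMonotone_flow_graph_iff hB.1⟩

end CyclicMonotonicity

theorem nondegenerate_dotProductBilin {R ι : Type*} [CommSemiring R] [Fintype ι] :
    (dotProductBilin R R : (ι → R) →ₗ[R] (ι → R) →ₗ[R] R).Nondegenerate :=
  ⟨fun x hx => dotProduct_eq_zero x hx,
    fun y hy => dotProduct_eq_zero y fun x => (dotProduct_comm y x).trans (hy x)⟩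

theorem IsDirac.dot_snd_fst_eq_zero {n : ℕ} {D : Set ((Fin n → ℝ) × (Fin n → ℝ))} (hD : IsDirac D)
    {p : (Fin n → ℝ) × (Fin n → ℝ)} (hp : p ∈ D) : dot p.2 p.1 = 0 := by
  have self_orth : bform p p = 0 := (hD.2.subset hp) p hp
  exact add_self_eq_zero.mp self_orth

/-- A Dirac structure which is the graph of a linear map `J : E → F`
(resp. `J : F → E`) is cyclically monotone iff `J = 0`. -/
theorem dirac_graph_cycMonotone_iff_zero {n : ℕ} :
    (∀ J : (Fin n → ℝ) →ₗ[ℝ] (Fin n → ℝ),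
      IsDirac {p : (Fin n → ℝ) × (Fin n → ℝ) | ∃ e, p = (J e, e)} →
      (CycMono2 {p : (Fin n → ℝ) × (Fin n → ℝ) | ∃ e, p = (J e, e)} ↔ J = 0)) ∧
    (∀ J : (Fin n → ℝ) →ₗ[ℝ] (Fin n → ℝ),
      IsDirac {p : (Fin n → ℝ) × (Fin n → ℝ) | ∃ f, p = (f, J f)} →
      (CycMono2 {p : (Fin n → ℝ) × (Fin n → ℝ) | ∃ f, p = (f, J f)} ↔ J = 0)) := by
  have h := dirac_graph_cycMonotone_iff_zero_general
    (nondegenerate_dotProductBilin (R := ℝ) (ι := Fin n))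
  exact ⟨fun J hD => h.1 J fun e => hD.dot_snd_fst_eq_zero ⟨e, rfl⟩,
    fun J hD => h.2 J fun f => hD.dot_snd_fst_eq_zero ⟨f, rfl⟩⟩
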